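/- Fix integers ℓ ≥ 1 and n ≥ 1, set ε = 1/n and d = (2ℓ)!/ℓ! + ℓ. There exists a finitely supported probability mass function μ on instances whose items have weight vectors taking values only in {0, ε} on each of the d coordinates, such that: (i) every list l in the support of μ satisfies OPT(l) ≥ ℓ·n = ℓ/ε; and (ii) for every deterministic online algorithm with free disposal A, the expectation ∑' l, μ(l) · |A(l)| ≤ 2n = 2/ε. (Since ℓ = Θ(log d / log log d) and the sparsity satisfies k ≤ d, by Yao's principle this shows that no randomized algorithm has competitive ratio o(log k / log log k), even when the maximum entry ε of all weight vectors is arbitrarily small and the utility function is f(S) = |S|.) -/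

import Mathlib

open scoped BigOperators ENNReal

/-- The weight of the item at position `p` of the list `l` on dimension `i`
(zero if `p` is out of range). -/
def weightAt {Item : Type*} {d : ℕ} (w : Item → Fin d → ℝ) (l : List Item)
    (p : ℕ) (i : Fin d) : ℝ :=
  (l[p]?.map fun u => w u i).getD 0

/-- A finite set of positions `P` is feasible for the instance `l` if all positions are
valid indices and on every dimension the total weight is at most `1`. -/
def Feasible {Item : Type*} {d : ℕ} (w : Item → Fin d → ℝ) (l : List Item)
    (P : Finset ℕ) : Prop :=
  (∀ p ∈ P, p < l.length) ∧ ∀ i : Fin d, ∑ p ∈ P, weightAt w l p i ≤ 1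

/-- `OPT w l` is the maximum cardinality of a feasible set of positions for `l`. -/
noncomputable def OPT {Item : Type*} {d : ℕ} (w : Item → Fin d → ℝ) (l : List Item) : ℕ :=
  sSup {n | ∃ P : Finset ℕ, Feasible w l P ∧ P.card = n}

/-- A deterministic online algorithm with free disposal. -/
structure OnlineAlg {Item : Type*} {d : ℕ} (w : Item → Fin d → ℝ) where
  A : List Item → Finset ℕ
  online : ∀ (l : List Item) (u : Item), A (l ++ [u]) ⊆ A l ∪ {l.length}
  feasible : ∀ l : List Item, Feasible w l (A l)

/-!
The adversary hides a uniformly random leaf `σ` of the complete `k`-ary tree of depth `ℓ`. In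
round `j` it presents, for every label `a`, `n` copies of an item of weight `1 / n`; those with
label `σ j` are the correct items of the round. Besides one dimension per round, there is one per
leaf `τ`, loaded in round `j` by the items `a ≠ τ j` as long as `τ` agrees with `σ` before round
`j`. Items presented before round `j` is over reveal nothing about `σ j`, and the dimension of
round `j` lets an algorithm keep only `n` items of that round; so it holds at most `n / k` correct
items of each round on average. All its other items load the dimension of the leaf `σ`, hence
there are at most `n` of them. The `ℓ * n` correct items, on the other hand, never load a common
dimension in two different rounds.
-/

section General

theorem tsum_pmf_map_mul {α β : Type*} (p : PMF α) (g : α → β) (f : β → ℝ≥0∞) :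
    ∑' b, p.map g b * f b = ∑' a, p a * f (g a) := by
  classical
  simp only [PMF.map_apply, ← ENNReal.tsum_mul_right]
  rw [ENNReal.tsum_comm]
  refine tsum_congr fun a => ?_
  rw [tsum_eq_single (g a) fun b hb => by simp [hb]]
  simp

theorem sum_sum_update {ι M : Type*} {κ : ι → Type*} [Fintype ι] [DecidableEq ι]
    [∀ i, Fintype (κ i)] [AddCommMonoid M] (g : (∀ i, κ i) → M) (i : ι) :
    ∑ σ, ∑ a, g (Function.update σ i a) = Fintype.card (κ i) • ∑ σ, g σ := by
  let swap (x : (∀ i, κ i) × κ i) : (∀ i, κ i) × κ i := (Function.update x.1 i x.2, x.1 i)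
  have swap_involutive : Function.Involutive swap := fun x => by simp [swap]
  calc ∑ σ, ∑ a, g (Function.update σ i a)
      = ∑ x : (∀ i, κ i) × κ i, g (Function.update x.1 i x.2) := (Fintype.sum_prod_type' _).symm
    _ = ∑ x : (∀ i, κ i) × κ i, g x.1 := Equiv.sum_comp swap_involutive.toPerm fun x => g x.1
    _ = Fintype.card (κ i) • ∑ σ, g σ := by
      simp [Fintype.sum_prod_type, Finset.smul_sum]

theorem pow_self_le_factorial_two_mul_div (m : ℕ) :
    m ^ m ≤ Nat.factorial (2 * m) / Nat.factorial m := by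
  rw [two_mul, ← Nat.ascFactorial_eq_div]
  exact (Nat.pow_le_pow_left m.le_succ m).trans (Nat.pow_succ_le_ascFactorial (m + 1) m)

variable {Item : Type*} {d : ℕ} {w : Item → Fin d → ℝ}

theorem Feasible.card_le_OPT {l : List Item} {P : Finset ℕ} (hP : Feasible w l P) :
    P.card ≤ OPT w l := by
  refine le_csSup ⟨l.length, ?_⟩ ⟨P, hP, rfl⟩
  rintro _ ⟨Q, hQ, rfl⟩
  simpa using Finset.card_le_card fun p hp => Finset.mem_range.2 (hQ.1 p hp)

theorem Feasible.of_take {l : List Item} {m : ℕ} {P : Finset ℕ} (hP : Feasible w (l.take m) P) :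
    Feasible w l P := by
  have lt_of_mem : ∀ p ∈ P, p < m ∧ p < l.length := fun p hp => by simpa using hP.1 p hp
  refine ⟨fun p hp => (lt_of_mem p hp).2, fun i => ?_⟩
  refine le_of_eq_of_le (Finset.sum_congr rfl fun p hp => ?_) (hP.2 i)
  simp only [weightAt, List.getElem?_take, (lt_of_mem p hp).1, if_true]

theorem OnlineAlg.mem_of_mem_append (alg : OnlineAlg w) {l₁ : List Item} (l₂ : List Item) {p : ℕ}
    (hp : p ∈ alg.A (l₁ ++ l₂)) (hlt : p < l₁.length) : p ∈ alg.A l₁ := by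
  induction l₂ using List.reverseRecOn with
  | nil => simpa using hp
  | append_singleton l u ih =>
    rw [← List.append_assoc] at hp
    rcases Finset.mem_union.1 (alg.online _ _ hp) with h | h
    · exact ih h
    · have : p = (l₁ ++ l).length := Finset.mem_singleton.1 h
      grind

theorem OnlineAlg.mem_take (alg : OnlineAlg w) {l : List Item} {m p : ℕ} (hp : p ∈ alg.A l)
    (hlt : p < m) : p ∈ alg.A (l.take m) := by
  have hl : p < l.length := (alg.feasible l).1 p hp
  rw [← List.take_append_drop m l] at hp
  exact alg.mem_of_mem_append _ hp (by simp [hlt, hl])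

end General

namespace HiddenLeaf

/-- The places of the instance: `((j, a), c)` is the `c`-th copy of the item of round `j` with
label `a`. -/
abbrev Slot (ℓ k n : ℕ) : Type := (Fin ℓ × Fin k) × Fin n

/-- The dimensions of the hard instances: one for each leaf of the tree and one for each round. -/
abbrev Dim (ℓ k : ℕ) : Type := (Fin ℓ → Fin k) ⊕ Fin ℓ

/-- Items are their own weight vectors. -/
abbrev selfWeight (d : ℕ) : (Fin d → ℝ) → Fin d → ℝ := fun u => u

variable {ℓ k n d : ℕ}

/-- The order of presentation of the slots, lexicographic in round, label and copy. -/
def slotEquiv (ℓ k n : ℕ) : Slot ℓ k n ≃ Fin (ℓ * k * n) :=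
  (finProdFinEquiv.prodCongr (Equiv.refl _)).trans finProdFinEquiv

/-- The position of a slot in the instance. -/
def pos : Slot ℓ k n ↪ ℕ := (slotEquiv ℓ k n).toEmbedding.trans Fin.valEmbedding

/-- The slots whose positions belong to `P`. -/
def slotsIn (ℓ k n : ℕ) (P : Finset ℕ) : Finset (Slot ℓ k n) := {s | pos s ∈ P}

/-- The dimensions loaded by the item of round and label `q` if the hidden leaf is `σ`. -/
def load (σ : Fin ℓ → Fin k) (q : Fin ℓ × Fin k) : Finset (Dim ℓ k) :=
  Finset.disjSum {τ | (∀ i < q.1, τ i = σ i) ∧ τ q.1 ≠ q.2} {q.1}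

/-- The item with weight `1 / n` on the dimensions in `load σ q`. The abstract dimensions are placed
among the `d` coordinates by `E`; the remaining coordinates carry no weight. -/
noncomputable def item (n : ℕ) (E : Dim ℓ k ↪ Fin d) (σ : Fin ℓ → Fin k) (q : Fin ℓ × Fin k) :
    Fin d → ℝ :=
  Set.indicator ((load σ q).map E) fun _ => 1 / (n : ℝ)

/-- The instance with hidden leaf `σ`. -/
noncomputable def hardInstance (n : ℕ) (E : Dim ℓ k ↪ Fin d) (σ : Fin ℓ → Fin k) :
    List (Fin d → ℝ) :=
  List.ofFn fun p => item n E σ ((slotEquiv ℓ k n).symm p).1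

/-- The slots of `P` in round `j` that carry the correct label `σ j`. -/
def correctSlots (n : ℕ) (σ : Fin ℓ → Fin k) (j : Fin ℓ) (P : Finset ℕ) : Finset (Slot ℓ k n) :=
  {s ∈ slotsIn ℓ k n P | s.1 = (j, σ j)}

theorem pos_lt (s : Slot ℓ k n) : pos s < ℓ * k * n := (slotEquiv ℓ k n s).isLt

theorem pos_lt_iff (s : Slot ℓ k n) (j : Fin ℓ) : pos s < (j + 1) * k * n ↔ s.1.1 ≤ j := by
  obtain ⟨⟨i, a⟩, c⟩ := s
  have hpos : pos ((i, a), c) = c + n * (a + k * i) := rfl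
  rw [← Nat.div_lt_iff_lt_mul c.pos, ← Nat.div_lt_iff_lt_mul a.pos, hpos,
    Nat.add_mul_div_left _ _ c.pos, Nat.div_eq_of_lt c.isLt, zero_add,
    Nat.add_mul_div_left _ _ a.pos, Nat.div_eq_of_lt a.isLt, zero_add, Nat.lt_succ_iff,
    Fin.val_fin_le]

theorem map_pos_slotsIn {P : Finset ℕ} (hP : ∀ p ∈ P, p < ℓ * k * n) :
    (slotsIn ℓ k n P).map pos = P := by
  ext p
  simp only [Finset.mem_map, slotsIn, Finset.mem_filter_univ]
  refine ⟨fun ⟨_, hs, hsp⟩ => hsp ▸ hs, fun hp => ?_⟩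
  have hpos : pos ((slotEquiv ℓ k n).symm ⟨p, hP p hp⟩) = p := by simp [pos]
  exact ⟨_, hpos.symm ▸ hp, hpos⟩

section Instance

variable (E : Dim ℓ k ↪ Fin d) (σ : Fin ℓ → Fin k)

@[simp]
theorem length_hardInstance : (hardInstance n E σ).length = ℓ * k * n := List.length_ofFn

theorem eq_zero_or_eq_of_mem_hardInstance {u : Fin d → ℝ} (hu : u ∈ hardInstance n E σ)
    (i : Fin d) : u i = 0 ∨ u i = 1 / (n : ℝ) := by
  obtain ⟨p, rfl⟩ := List.mem_ofFn.1 hu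
  exact Set.indicator_eq_zero_or_self _ _ _

theorem weightAt_hardInstance_pos (s : Slot ℓ k n) (i : Fin d) :
    weightAt (selfWeight d) (hardInstance n E σ) (pos s) i = item n E σ s.1 i := by
  have hget : (hardInstance n E σ)[pos s]? = some (item n E σ s.1) := by
    rw [List.getElem?_eq_getElem (by simpa using pos_lt s)]
    simp [hardInstance, pos]
  simp [weightAt, hget]

theorem sum_weightAt_map_pos (T : Finset (Slot ℓ k n)) (x : Dim ℓ k) :
    ∑ p ∈ T.map pos, weightAt (selfWeight d) (hardInstance n E σ) p (E x) =
      ({s ∈ T | x ∈ load σ s.1}.card : ℝ) / n := by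
  have item_apply (q : Fin ℓ × Fin k) :
      item n E σ q (E x) = if x ∈ load σ q then 1 / (n : ℝ) else 0 := by
    simp [item, Set.indicator_apply, -Finset.coe_map]
  rw [Finset.sum_map]
  simp only [weightAt_hardInstance_pos, item_apply, ← Finset.sum_filter, Finset.sum_const,
    nsmul_eq_mul, mul_one_div]

theorem sum_weightAt_map_pos_of_notMem_range (T : Finset (Slot ℓ k n)) {i : Fin d}
    (hi : i ∉ Set.range E) :
    ∑ p ∈ T.map pos, weightAt (selfWeight d) (hardInstance n E σ) p i = 0 := by
  rw [Finset.sum_map]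
  refine Finset.sum_eq_zero fun s _ => ?_
  rw [weightAt_hardInstance_pos, item, Set.indicator_of_notMem]
  rw [Finset.coe_map]
  exact fun h => hi (Set.image_subset_range _ _ h)

theorem feasible_map_pos_iff (hn : 1 ≤ n) (T : Finset (Slot ℓ k n)) :
    Feasible (selfWeight d) (hardInstance n E σ) (T.map pos) ↔
      ∀ x, {s ∈ T | x ∈ load σ s.1}.card ≤ n := by
  have hn' : (0 : ℝ) < n := by exact_mod_cast hn
  have load_le_one_iff (x : Dim ℓ k) :
      ∑ p ∈ T.map pos, weightAt (selfWeight d) (hardInstance n E σ) p (E x) ≤ 1 ↔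
        {s ∈ T | x ∈ load σ s.1}.card ≤ n := by
    rw [sum_weightAt_map_pos, div_le_one hn', Nat.cast_le]
  refine ⟨fun h x => (load_le_one_iff x).1 (h.2 (E x)), fun h => ⟨?_, fun i => ?_⟩⟩
  · intro p hp
    obtain ⟨s, -, rfl⟩ := Finset.mem_map.1 hp
    simpa using pos_lt s
  · by_cases hi : i ∈ Set.range E
    · obtain ⟨x, rfl⟩ := hi
      exact (load_le_one_iff x).2 (h x)
    · rw [sum_weightAt_map_pos_of_notMem_range E σ T hi]
      exact zero_le_one

variable {E σ}

theorem map_pos_slotsIn_of_feasible {P : Finset ℕ}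
    (hP : Feasible (selfWeight d) (hardInstance n E σ) P) : (slotsIn ℓ k n P).map pos = P :=
  map_pos_slotsIn fun p hp => by simpa using hP.1 p hp

theorem card_slotsIn_filter_le (hn : 1 ≤ n) {P : Finset ℕ}
    (hP : Feasible (selfWeight d) (hardInstance n E σ) P) (x : Dim ℓ k) :
    {s ∈ slotsIn ℓ k n P | x ∈ load σ s.1}.card ≤ n :=
  (feasible_map_pos_iff E σ hn _).1 ((map_pos_slotsIn_of_feasible hP).symm ▸ hP) x

end Instance

section Offline

theorem round_eq_of_mem_load (σ : Fin ℓ → Fin k) {x : Dim ℓ k} {i j : Fin ℓ}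
    (hi : x ∈ load σ (i, σ i)) (hj : x ∈ load σ (j, σ j)) : i = j := by
  rcases x with τ | r
  · simp only [load, Finset.inl_mem_disjSum, Finset.mem_filter_univ] at hi hj
    rcases lt_trichotomy i j with h | h | h
    · exact absurd (hj.1 i h) hi.2
    · exact h
    · exact absurd (hi.1 j h) hj.2
  · simp only [load, Finset.inr_mem_disjSum, Finset.mem_singleton] at hi hj
    exact hi.symm.trans hj

theorem mul_le_OPT_hardInstance (hn : 1 ≤ n) (E : Dim ℓ k ↪ Fin d) (σ : Fin ℓ → Fin k) :
    ℓ * n ≤ OPT (selfWeight d) (hardInstance n E σ) := by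
  let correct : Fin ℓ × Fin n ↪ Slot ℓ k n := ⟨fun x => ((x.1, σ x.1), x.2), fun x y h => by
    simp only [Prod.mk.injEq] at h
    exact Prod.ext h.1.1 h.2⟩
  have feasible :
      Feasible (selfWeight d) (hardInstance n E σ) ((Finset.univ.map correct).map pos) := by
    refine (feasible_map_pos_iff E σ hn _).2 fun x => ?_
    rw [Finset.filter_map, Finset.card_map]
    have copy_injOn : Set.InjOn Prod.snd
        (({y | x ∈ load σ (correct y).1} : Finset (Fin ℓ × Fin n)) : Set (Fin ℓ × Fin n)) := by
      intro y hy z hz hyz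
      rw [Finset.mem_coe, Finset.mem_filter_univ] at hy hz
      exact Prod.ext (round_eq_of_mem_load σ hy hz) hyz
    simpa using Finset.card_le_card_of_injOn Prod.snd (fun _ _ => Finset.mem_univ _) copy_injOn
  simpa using feasible.card_le_OPT

end Offline

section Online

theorem card_le_add_sum_card_correctSlots (hn : 1 ≤ n) {E : Dim ℓ k ↪ Fin d} {σ : Fin ℓ → Fin k}
    {P : Finset ℕ} (hP : Feasible (selfWeight d) (hardInstance n E σ) P) :
    P.card ≤ n + ∑ j, (correctSlots n σ j P).card := by
  set S := slotsIn ℓ k n P with hS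
  have card_wrong : {s ∈ S | σ s.1.1 ≠ s.1.2}.card ≤ n := by
    simpa [load] using card_slotsIn_filter_le hn hP (Sum.inl σ)
  have card_correct : {s ∈ S | ¬ σ s.1.1 ≠ s.1.2}.card = ∑ j, (correctSlots n σ j P).card := by
    rw [Finset.card_eq_sum_card_fiberwise (f := fun s => s.1.1) (t := Finset.univ) (by simp)]
    refine Finset.sum_congr rfl fun j _ => congrArg Finset.card ?_
    rw [correctSlots, Finset.filter_filter]
    refine Finset.filter_congr fun s _ => ?_
    grind
  calc P.card = S.card := by rw [← Finset.card_map pos, hS, map_pos_slotsIn_of_feasible hP]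
    _ = _ := (Finset.card_filter_add_card_filter_not fun s => σ s.1.1 ≠ s.1.2).symm
    _ ≤ n + ∑ j, (correctSlots n σ j P).card := by rw [card_correct]; gcongr

theorem item_congr (n : ℕ) (E : Dim ℓ k ↪ Fin d) {σ σ' : Fin ℓ → Fin k} {q : Fin ℓ × Fin k}
    (h : ∀ i < q.1, σ i = σ' i) : item n E σ q = item n E σ' q := by
  have hload : load σ q = load σ' q := by
    refine congrArg (Finset.disjSum · _) (Finset.filter_congr fun τ _ => and_congr_left' ?_)
    exact forall₂_congr fun i hi => by rw [h i hi]
  rw [item, item, hload]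

theorem take_hardInstance_congr (n : ℕ) (E : Dim ℓ k ↪ Fin d) {σ σ' : Fin ℓ → Fin k} {j : Fin ℓ}
    (h : ∀ i < j, σ i = σ' i) :
    (hardInstance n E σ).take ((j + 1) * k * n) = (hardInstance n E σ').take ((j + 1) * k * n) := by
  refine List.ext_getElem (by simp) fun p hp _ => ?_
  simp only [List.length_take, length_hardInstance, lt_min_iff] at hp
  simp only [List.getElem_take, hardInstance, List.getElem_ofFn]
  set s := (slotEquiv ℓ k n).symm ⟨p, hp.2⟩ with hs
  have hpos : pos s = p := by simp [pos, hs]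
  have hround : s.1.1 ≤ j := (pos_lt_iff s j).1 (hpos ▸ hp.1)
  exact item_congr n E fun i hi => h i (hi.trans_le hround)

/-- The positions held by the algorithm at the end of round `j`. -/
noncomputable def snapshot (alg : OnlineAlg (selfWeight d)) (n : ℕ) (E : Dim ℓ k ↪ Fin d)
    (σ : Fin ℓ → Fin k) (j : Fin ℓ) : Finset ℕ :=
  alg.A ((hardInstance n E σ).take ((j + 1) * k * n))

variable (alg : OnlineAlg (selfWeight d)) (E : Dim ℓ k ↪ Fin d)

theorem correctSlots_subset_snapshot (σ : Fin ℓ → Fin k) (j : Fin ℓ) (a : Fin k) :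
    correctSlots n (Function.update σ j a) j (alg.A (hardInstance n E (Function.update σ j a))) ⊆
      {s ∈ slotsIn ℓ k n (snapshot alg n E σ j) | s.1 = (j, a)} := by
  intro s hs
  simp only [correctSlots, slotsIn, Finset.mem_filter, Finset.mem_univ, true_and,
    Function.update_self] at hs ⊢
  have hlt : pos s < (j + 1) * k * n := (pos_lt_iff s j).2 (by simp [hs.2])
  rw [snapshot, ← take_hardInstance_congr n E fun i hi => Function.update_of_ne hi.ne a σ]
  exact ⟨alg.mem_take hs.1 hlt, hs.2⟩

theorem sum_card_correctSlots_update_le (hn : 1 ≤ n) (σ : Fin ℓ → Fin k) (j : Fin ℓ) :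
    ∑ a, (correctSlots n (Function.update σ j a) j
      (alg.A (hardInstance n E (Function.update σ j a)))).card ≤ n := by
  set S := slotsIn ℓ k n (snapshot alg n E σ j)
  calc _ ≤ ∑ a, {s ∈ S | s.1 = (j, a)}.card :=
        Finset.sum_le_sum fun a _ => Finset.card_le_card (correctSlots_subset_snapshot alg E σ j a)
    _ = {s ∈ S | s.1.1 = j}.card := by
      rw [Finset.card_eq_sum_card_fiberwise (f := fun s => s.1.2) (t := Finset.univ) (by simp)]
      simp only [Finset.filter_filter, Prod.ext_iff]
    _ ≤ n := by
      have feasible : Feasible (selfWeight d) (hardInstance n E σ) (snapshot alg n E σ j) :=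
        (alg.feasible _).of_take
      simpa [load, eq_comm] using card_slotsIn_filter_le hn feasible (Sum.inr j)

theorem mul_sum_card_correctSlots_le (hn : 1 ≤ n) (j : Fin ℓ) :
    k * ∑ σ, (correctSlots n σ j (alg.A (hardInstance n E σ))).card ≤ k ^ ℓ * n := by
  calc _ = ∑ σ : Fin ℓ → Fin k, ∑ a, (correctSlots n (Function.update σ j a) j
        (alg.A (hardInstance n E (Function.update σ j a)))).card := by
        simp [sum_sum_update fun σ => (correctSlots n σ j (alg.A (hardInstance n E σ))).card]
    _ ≤ ∑ _σ : Fin ℓ → Fin k, n :=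
      Finset.sum_le_sum fun σ _ => sum_card_correctSlots_update_le alg E hn σ j
    _ = k ^ ℓ * n := by simp

theorem mul_sum_card_le (hn : 1 ≤ n) :
    k * ∑ σ, (alg.A (hardInstance n E σ)).card ≤ k ^ ℓ * ((k + ℓ) * n) := by
  calc k * ∑ σ, (alg.A (hardInstance n E σ)).card
      ≤ k * ∑ σ, (n + ∑ j, (correctSlots n σ j (alg.A (hardInstance n E σ))).card) := by
        gcongr with σ
        exact card_le_add_sum_card_correctSlots hn (alg.feasible _)
    _ = k ^ ℓ * (k * n) + ∑ j, k * ∑ σ, (correctSlots n σ j (alg.A (hardInstance n E σ))).card := by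
        rw [Finset.sum_add_distrib, Finset.sum_comm, mul_add, Finset.mul_sum]
        simp [mul_left_comm, Finset.mul_sum]
    _ ≤ k ^ ℓ * (k * n) + ∑ _j : Fin ℓ, k ^ ℓ * n := by
        exact Nat.add_le_add_left
          (Finset.sum_le_sum fun j _ => mul_sum_card_correctSlots_le alg E hn j) _
    _ = k ^ ℓ * ((k + ℓ) * n) := by rw [Fin.sum_const, smul_eq_mul]; ring

end Online

/-- The hard distribution: the hidden leaf is uniformly random. -/
noncomputable def hardPMF (n : ℕ) [NeZero k] (E : Dim ℓ k ↪ Fin d) : PMF (List (Fin d → ℝ)) :=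
  (PMF.uniformOfFintype (Fin ℓ → Fin k)).map (hardInstance n E)

section Distribution

variable [NeZero k]

theorem support_hardPMF (E : Dim ℓ k ↪ Fin d) :
    (hardPMF n E).support = Set.range (hardInstance n E) := by
  simp [hardPMF, PMF.support_map]

theorem tsum_hardPMF_mul_card_le (hn : 1 ≤ n) (E : Dim ℓ k ↪ Fin d)
    (alg : OnlineAlg (selfWeight d)) :
    ∑' l, hardPMF n E l * ((alg.A l).card : ℝ≥0∞) ≤ (1 + ℓ / k) * n := by
  have hk : (k : ℝ≥0∞) ≠ 0 := by simp [NeZero.ne k]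
  have hk' : (k : ℝ≥0∞) ≠ ∞ := ENNReal.natCast_ne_top k
  have htotal : (k : ℝ≥0∞) * ∑ σ, ((alg.A (hardInstance n E σ)).card : ℝ≥0∞) ≤
      k ^ ℓ * ((k + ℓ) * n) := by
    exact_mod_cast mul_sum_card_le alg E hn
  calc ∑' l, hardPMF n E l * ((alg.A l).card : ℝ≥0∞)
      = (k ^ ℓ : ℝ≥0∞)⁻¹ * ∑ σ, ((alg.A (hardInstance n E σ)).card : ℝ≥0∞) := by
        rw [hardPMF, tsum_pmf_map_mul, tsum_fintype, Finset.mul_sum]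
        simp
    _ ≤ (k + ℓ) * n / k := by
        rw [ENNReal.inv_mul_le_iff (by simp [hk]) (by simp [hk']), ← mul_div_assoc,
          ENNReal.le_div_iff_mul_le (.inl hk) (.inl hk'), mul_comm]
        exact htotal
    _ = (1 + ℓ / k) * n := by
        rw [ENNReal.mul_div_right_comm, ENNReal.add_div, ENNReal.div_self hk hk']

end Distribution

end HiddenLeaf

theorem statement3_general (ℓ k n d : ℕ) (hk : 1 ≤ k) (hn : 1 ≤ n) (hd : k ^ ℓ + ℓ ≤ d) :
    ∃ μ : PMF (List (Fin d → ℝ)),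
      μ.support.Finite ∧
      (∀ l ∈ μ.support, ∀ u ∈ l, ∀ i : Fin d, u i = 0 ∨ u i = 1 / (n : ℝ)) ∧
      (∀ l ∈ μ.support, ℓ * n ≤ OPT (fun u : Fin d → ℝ => u) l) ∧
      (∀ alg : OnlineAlg (fun u : Fin d → ℝ => u),
        ∑' l, μ l * ((alg.A l).card : ℝ≥0∞) ≤ (1 + ℓ / k) * n) := by
  have : NeZero k := ⟨Nat.one_le_iff_ne_zero.1 hk⟩
  obtain ⟨E⟩ : Nonempty (HiddenLeaf.Dim ℓ k ↪ Fin d) :=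
    Function.Embedding.nonempty_of_card_le (by simpa using hd)
  refine ⟨HiddenLeaf.hardPMF n E, ?_, ?_, ?_, HiddenLeaf.tsum_hardPMF_mul_card_le hn E⟩ <;>
    rw [HiddenLeaf.support_hardPMF]
  · exact Set.finite_range _
  · rintro _ ⟨σ, rfl⟩ u hu
    exact HiddenLeaf.eq_zero_or_eq_of_mem_hardInstance E σ hu
  · rintro _ ⟨σ, rfl⟩
    exact HiddenLeaf.mul_le_OPT_hardInstance hn E σ

/-- Hardness under the small weight assumption: with `ε = 1/n` and
`d = (2ℓ)!/ℓ! + ℓ` dimensions there is a finitely supported distribution over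
instances, all weights lying in `{0, ε}`, whose offline optimum is always at least
`ℓ·n = ℓ/ε`, while every deterministic online algorithm with free disposal keeps at most
`2n = 2/ε` items in expectation. Items are identified with their weight vectors. -/
theorem statement3 (ℓ n : ℕ) (hℓ : 1 ≤ ℓ) (hn : 1 ≤ n) :
    ∃ μ : PMF (List (Fin (Nat.factorial (2 * ℓ) / Nat.factorial ℓ + ℓ) → ℝ)),
      μ.support.Finite ∧
      (∀ l ∈ μ.support, ∀ u ∈ l,
        ∀ i : Fin (Nat.factorial (2 * ℓ) / Nat.factorial ℓ + ℓ),
          u i = 0 ∨ u i = 1 / (n : ℝ)) ∧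
      (∀ l ∈ μ.support,
        ℓ * n ≤ OPT (fun u : Fin (Nat.factorial (2 * ℓ) / Nat.factorial ℓ + ℓ) → ℝ => u) l) ∧
      (∀ alg : OnlineAlg
          (fun u : Fin (Nat.factorial (2 * ℓ) / Nat.factorial ℓ + ℓ) → ℝ => u),
        ∑' l, μ l * ((alg.A l).card : ℝ≥0∞) ≤ 2 * n) := by
  simpa [ENNReal.div_self (Nat.cast_ne_zero.2 (Nat.one_le_iff_ne_zero.1 hℓ)), one_add_one_eq_two]
    using statement3_general ℓ ℓ n _ hℓ hn
      (Nat.add_le_add_right (pow_self_le_factorial_two_mul_div ℓ) ℓ)
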